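/- Let CFG(G,O) be a simple chip firing game reaching a unique fixed point, with configuration space the finite ULD lattice L = CFG(G,O), and let κ : M → 𝒱 be the bijection sending each meet-irreducible m to the vertex fired in any cover c ⋖ c' with 𝔪(c,c') = m. Then for every configuration c ∈ CFG(G,O), the set ϑ(c) of vertices fired in any firing sequence from O to c equals κ(M \ M_c). -/

import Mathlib

open Classical

section CFGdefs

variable {V : Type*}

/-- Out-degree of a vertex in a directed multigraph with edge multiplicities `E`. -/
noncomputable def outDeg (E : V → V → ℕ) (v : V) : ℕ := ∑ᶠ u, E v u

/-- A vertex is a sink if all its outgoing edges are loops. -/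
def IsSink (E : V → V → ℕ) (v : V) : Prop := outDeg E v = E v v

/-- A vertex is firable in configuration `c`. -/
def Firable (E : V → V → ℕ) (c : V → ℕ) (v : V) : Prop :=
  ¬ IsSink E v ∧ outDeg E v ≤ c v

/-- The result of firing vertex `v` in configuration `c`. -/
noncomputable def fire (E : V → V → ℕ) (c : V → ℕ) (v : V) : V → ℕ :=
  fun u => if u = v then c v - outDeg E v + E v v else c u + E v u

/-- The configuration obtained by firing a list of vertices in order. -/
noncomputable def fireList (E : V → V → ℕ) : (V → ℕ) → List V → (V → ℕ)
  | c, [] => c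
  | c, v :: l => fireList E (fire E c v) l

/-- A list of vertices is a valid firing sequence from `c`. -/
def ValidSeq (E : V → V → ℕ) : (V → ℕ) → List V → Prop
  | _, [] => True
  | c, v :: l => Firable E c v ∧ ValidSeq E (fire E c v) l

/-- `c'` is reachable from `c` by a finite sequence of firings. -/
def Reaches (E : V → V → ℕ) (c c' : V → ℕ) : Prop :=
  ∃ l : List V, ValidSeq E c l ∧ fireList E c l = c'

/-- A configuration with no firable vertex. -/
def FixedPt (E : V → V → ℕ) (c : V → ℕ) : Prop := ∀ v, ¬ Firable E c v

/-- The chip firing game `CFG(G,O)` reaches a unique fixed point. -/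
def ReachesUFP (E : V → V → ℕ) (O : V → ℕ) : Prop :=
  ∃ fp : V → ℕ, Reaches E O fp ∧ FixedPt E fp ∧ ∀ c, Reaches E O c → Reaches E c fp

/-- The game is simple: in every firing sequence from `O` to the fixed point,
each vertex fires at most once. -/
def SimpleCFG (E : V → V → ℕ) (O : V → ℕ) : Prop :=
  ∀ l : List V, ValidSeq E O l → FixedPt E (fireList E O l) → l.Nodup

/-- Single firing step from `c` to `c'` by firing vertex `v`. -/
def FireStep (E : V → V → ℕ) (c : V → ℕ) (v : V) (c' : V → ℕ) : Prop :=
  Firable E c v ∧ fire E c v = c'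

/-- The partial order `L` is order-isomorphic to the configuration space of
`CFG(G,O)` ordered by reachability. -/
def Generates (E : V → V → ℕ) (O : V → ℕ) (L : Type*) [PartialOrder L] : Prop :=
  ∃ f : L ≃ {c : V → ℕ // Reaches E O c},
    ∀ a b : L, a ≤ b ↔ Reaches E (f a).val (f b).val

/-- The support graph is connected (as an undirected graph). -/
def ConnectedG (E : V → V → ℕ) : Prop :=
  ∀ u v : V, Relation.ReflTransGen (fun a b => 0 < E a b ∨ 0 < E b a) u v

/-- The support graph together with its initial data is an Abelian Sandpile Model. -/
def IsASM (E : V → V → ℕ) : Prop :=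
  ConnectedG E ∧ ∃ s : V, IsSink E s ∧ (∀ v, IsSink E v → v = s) ∧
    ∀ v₁ v₂ : V, v₁ ≠ v₂ → v₁ ≠ s → v₂ ≠ s → E v₁ v₂ = E v₂ v₁

/-- The directed multigraph has no directed cycle. -/
def AcyclicG (E : V → V → ℕ) : Prop :=
  ∀ v : V, ¬ Relation.TransGen (fun a b => 0 < E a b) v v

end CFGdefs

/-- `L` is generated by some chip firing game reaching a unique fixed point. -/
def MemLCFG (L : Type*) [PartialOrder L] : Prop :=
  ∃ (V : Type) (_ : Finite V) (E : V → V → ℕ) (O : V → ℕ),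
    ReachesUFP E O ∧ Generates E O L

/-- `L` is generated by some Abelian Sandpile Model reaching a unique fixed point. -/
def MemLASM (L : Type*) [PartialOrder L] : Prop :=
  ∃ (V : Type) (_ : Finite V) (E : V → V → ℕ) (O : V → ℕ),
    IsASM E ∧ ReachesUFP E O ∧ Generates E O L

section Latticedefs

variable {L : Type*} [Lattice L]

/-- `m` is meet-irreducible: it has exactly one upper cover. -/
def MeetIrred (m : L) : Prop := ∃! y, m ⋖ y

/-- `j` is join-irreducible: it has exactly one lower cover. -/
def JoinIrred (j : L) : Prop := ∃! y, y ⋖ j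

/-- The set `M_x \ M_y` of meet-irreducibles above `x` but not above `y`. -/
def MsetDiff (x y : L) : Set L := {m | MeetIrred m ∧ x ≤ m ∧ ¬ y ≤ m}

/-- The set `M \ M_a` of meet-irreducibles not above `a`. -/
def MnotAbove (a : L) : Set L := {m | MeetIrred m ∧ ¬ a ≤ m}

/-- `x⁺`: the join of all upper covers of `x`. -/
noncomputable def uplus [Fintype L] [OrderBot L] (x : L) : L :=
  Finset.univ.sup (fun y => if x ⋖ y then y else ⊥)

/-- `L` is upper locally distributive: for every `x ≠ ⊤` the interval `[x, x⁺]`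
is isomorphic to a Boolean lattice (a hypercube). -/
def IsULD (L : Type*) [Lattice L] [Fintype L] [BoundedOrder L] : Prop :=
  ∀ x : L, x ≠ ⊤ → ∃ n : ℕ, Nonempty (↥(Set.Icc x (uplus x)) ≃o Set (Fin n))

/-- `𝔘_m`: the minimal elements of `{x : ∃ y, x ⋖ y and 𝔪(x,y) = m}`. -/
def Uset (m : L) : Set L :=
  {x | Minimal (fun z => ∃ y, z ⋖ y ∧ MsetDiff z y = {m}) x}

/-- `𝔏_m`: the maximal elements of `{x : a ≰ x for every a ∈ 𝔘_m}`. -/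
def Lset (m : L) : Set L :=
  {x | Maximal (fun z => ∀ a ∈ Uset m, ¬ a ≤ z) x}

/-- `(w, e)` is a (non-negative integer) solution of the system `E(m)`. -/
def SolvesE [OrderBot L] (m : L) (w : ℕ) (e : L → ℕ) : Prop :=
  (Uset m = {(⊥ : L)} → 1 ≤ w) ∧
  (Uset m ≠ {(⊥ : L)} →
    (∀ a ∈ Lset m, (∑ᶠ x ∈ MnotAbove a, e x) < w) ∧
    (∀ a ∈ Uset m, w ≤ ∑ᶠ x ∈ MnotAbove a, e x))

/-- The system `E(m)` has a non-negative integer solution. -/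
def HasSolE [OrderBot L] (m : L) : Prop := ∃ w e, SolvesE m w e

/-- The variable `e_{x,m}` occurs in the system `𝔈(m)`. -/
def VarOccurs [OrderBot L] (x m : L) : Prop :=
  MeetIrred m ∧ Uset m ≠ {(⊥ : L)} ∧ ∃ a ∈ Uset m ∪ Lset m, x ∈ MnotAbove a

/-- `(W, Ee)` is a non-negative integer solution of the system `Ω`. -/
def SolvesOmega [OrderBot L] (W : L → ℕ) (Ee : L → L → ℕ) : Prop :=
  (∀ m : L, MeetIrred m → SolvesE m (W m) (fun x => Ee x m)) ∧
  (∀ m₁ m₂ : L, m₁ ≠ m₂ → VarOccurs m₁ m₂ → VarOccurs m₂ m₁ → Ee m₁ m₂ = Ee m₂ m₁)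

/-- The edge relation of the directed graph `𝒢` on the meet-irreducibles. -/
def Gedge (m₁ m₂ : L) : Prop :=
  MeetIrred m₁ ∧ MeetIrred m₂ ∧ ∃ a ∈ Uset m₂, m₁ ∈ MnotAbove a

end Latticedefs

/-- The system `Ω` has a non-negative integer solution. -/
def HasSolOmega (L : Type*) [Lattice L] [OrderBot L] : Prop :=
  ∃ W Ee, SolvesOmega (L := L) W Ee

/-- The directed graph `𝒢` on the meet-irreducibles is acyclic. -/
def GAcyclic (L : Type*) [Lattice L] : Prop :=
  ∀ m : L, ¬ Relation.TransGen (Gedge (L := L)) m m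

section ChipFiring

variable {V : Type*} {E : V → V → ℕ}

theorem validSeq_append (c : V → ℕ) (l₁ l₂ : List V) :
    ValidSeq E c (l₁ ++ l₂) ↔ ValidSeq E c l₁ ∧ ValidSeq E (fireList E c l₁) l₂ := by
  induction l₁ generalizing c with
  | nil => simp [ValidSeq, fireList]
  | cons v l ih => simp [ValidSeq, fireList, ih, and_assoc]

theorem fireList_append (c : V → ℕ) (l₁ l₂ : List V) :
    fireList E c (l₁ ++ l₂) = fireList E (fireList E c l₁) l₂ := by
  induction l₁ generalizing c with
  | nil => rfl
  | cons v l ih => simp [fireList, ih]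

theorem Reaches.trans {c₁ c₂ c₃ : V → ℕ} (h : Reaches E c₁ c₂) (h' : Reaches E c₂ c₃) :
    Reaches E c₁ c₃ := by
  obtain ⟨l, hl, rfl⟩ := h
  obtain ⟨l', hl', rfl⟩ := h'
  exact ⟨l ++ l', (validSeq_append _ _ _).2 ⟨hl, hl'⟩, fireList_append _ _ _⟩

theorem Firable.reaches_fire {c : V → ℕ} {v : V} (h : Firable E c v) :
    Reaches E c (fire E c v) :=
  ⟨[v], ⟨h, trivial⟩, rfl⟩

theorem Firable.ne_fire {c : V → ℕ} {v : V} (h : Firable E c v) : c ≠ fire E c v := by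
  intro hc
  obtain ⟨hs, hd⟩ := h
  have hv := congrFun hc v
  simp only [fire, if_true] at hv
  unfold IsSink at hs
  omega

theorem Firable.fire_of_ne {c : V → ℕ} {u v : V} (h : Firable E c u) (huv : u ≠ v) :
    Firable E (fire E c v) u := by
  refine ⟨h.1, h.2.trans ?_⟩
  simp [fire, huv]

theorem fire_comm {c : V → ℕ} {u v : V} (hu : Firable E c u) (hv : Firable E c v)
    (huv : u ≠ v) : fire E (fire E c u) v = fire E (fire E c v) u := by
  have hu := hu.2
  have hv := hv.2
  funext w
  by_cases hwu : w = u
  · subst hwu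
    simp only [fire, huv, huv.symm, if_true, if_false]
    omega
  by_cases hwv : w = v
  · subst hwv
    simp only [fire, huv, huv.symm, if_true, if_false]
    omega
  simp only [fire, hwu, hwv, if_false]
  omega

/-- A firable vertex can be fired before a firing sequence in which it does not occur. -/
theorem ValidSeq.fire_of_notMem {c : V → ℕ} {v : V} {l : List V} (hv : Firable E c v)
    (hl : ValidSeq E c l) (hvl : v ∉ l) :
    Firable E (fireList E c l) v ∧ ValidSeq E (fire E c v) l ∧
      fireList E (fire E c v) l = fire E (fireList E c l) v := by
  induction l generalizing c with
  | nil => exact ⟨hv, trivial, rfl⟩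
  | cons u l ih =>
    rw [List.mem_cons, not_or] at hvl
    obtain ⟨hu, hl⟩ := hl
    obtain ⟨h₁, h₂, h₃⟩ := ih (hv.fire_of_ne hvl.1) hl hvl.2
    rw [← fire_comm hv hu hvl.1] at h₂ h₃
    exact ⟨h₁, ⟨hu.fire_of_ne (Ne.symm hvl.1), h₂⟩, h₃⟩

variable {O : V → ℕ}

theorem nodup_of_validSeq (hUFP : ReachesUFP E O) (hSimple : SimpleCFG E O) {l : List V}
    (hl : ValidSeq E O l) : l.Nodup := by
  obtain ⟨fp, -, hfix, h⟩ := hUFP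
  obtain ⟨s, hs, hs'⟩ := h _ ⟨l, hl, rfl⟩
  refine (hSimple (l ++ s) ((validSeq_append _ _ _).2 ⟨hl, hs⟩) ?_).of_append_left
  rw [fireList_append, hs']
  exact hfix

theorem nodup_of_validSeq_of_reaches (hUFP : ReachesUFP E O) (hSimple : SimpleCFG E O)
    {c : V → ℕ} (hc : Reaches E O c) {l : List V} (hl : ValidSeq E c l) : l.Nodup := by
  obtain ⟨p, hp, rfl⟩ := hc
  exact (nodup_of_validSeq hUFP hSimple
    ((validSeq_append _ _ _).2 ⟨hp, hl⟩)).of_append_right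

/-- In a simple game, no nonempty firing sequence returns to its starting configuration. -/
theorem eq_nil_of_fireList_eq_self (hUFP : ReachesUFP E O) (hSimple : SimpleCFG E O)
    {c : V → ℕ} (hc : Reaches E O c) {l : List V} (hl : ValidSeq E c l)
    (h : fireList E c l = c) : l = [] := by
  have hll : ValidSeq E c (l ++ l) := (validSeq_append _ _ _).2 ⟨hl, by rwa [h]⟩
  have hdis := List.disjoint_of_nodup_append
    (nodup_of_validSeq_of_reaches hUFP hSimple hc hll)
  exact List.eq_nil_iff_forall_not_mem.2 fun v hv => hdis hv hv

/-- In a simple game, the only firing sequence leading from `c` to `fire E c v` is `[v]`. -/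
theorem eq_singleton_of_fireList_eq_fire (hUFP : ReachesUFP E O) (hSimple : SimpleCFG E O)
    {c : V → ℕ} (hc : Reaches E O c) {v : V} (hv : Firable E c v) {l : List V}
    (hl : ValidSeq E c l) (h : fireList E c l = fire E c v) : l = [v] := by
  have hmem : v ∈ l := by
    by_contra hvl
    have hfir := (hl.fire_of_notMem hv hvl).1
    rw [h] at hfir
    have hvv : ValidSeq E c [v, v] := ⟨hv, hfir, trivial⟩
    simpa using nodup_of_validSeq_of_reaches hUFP hSimple hc hvv
  obtain ⟨a, b, rfl⟩ := List.append_of_mem hmem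
  have hva : v ∉ a := fun hva =>
    List.disjoint_of_nodup_append (nodup_of_validSeq_of_reaches hUFP hSimple hc hl) hva
      List.mem_cons_self
  obtain ⟨ha, -, hb⟩ := (validSeq_append _ _ _).1 hl
  obtain ⟨-, ha', hcomm⟩ := ha.fire_of_notMem hv hva
  rw [fireList_append, fireList, ← hcomm] at h
  rw [← hcomm] at hb
  have hnil := eq_nil_of_fireList_eq_self hUFP hSimple (hc.trans hv.reaches_fire)
    ((validSeq_append _ _ _).2 ⟨ha', hb⟩) (by rw [fireList_append, h])
  obtain ⟨rfl, rfl⟩ := List.append_eq_nil_iff.1 hnil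
  rfl

/-- In a simple game, firing a vertex is a cover relation of the configuration order. -/
theorem covBy_of_fireStep {L : Type*} [PartialOrder L]
    (hUFP : ReachesUFP E O) (hSimple : SimpleCFG E O)
    (f : L ≃ {c : V → ℕ // Reaches E O c})
    (hf : ∀ a b : L, a ≤ b ↔ Reaches E (f a).val (f b).val)
    {c c' : L} {v : V} (h : FireStep E (f c).val v (f c').val) : c ⋖ c' := by
  obtain ⟨hv, hfire⟩ := h
  refine ⟨lt_of_le_of_ne ((hf _ _).2 (hfire ▸ hv.reaches_fire)) ?_, ?_⟩
  · rintro rfl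
    exact hv.ne_fire hfire.symm
  · intro d hcd hdc
    obtain ⟨l₁, hl₁, h₁⟩ := (hf _ _).1 hcd.le
    obtain ⟨l₂, hl₂, h₂⟩ := (hf _ _).1 hdc.le
    have hsing := eq_singleton_of_fireList_eq_fire hUFP hSimple (f c).2 hv
      (l := l₁ ++ l₂) ((validSeq_append _ _ _).2 ⟨hl₁, by rwa [h₁]⟩)
      (by rw [fireList_append, h₁, h₂, hfire])
    rcases List.append_eq_singleton_iff.1 hsing with ⟨rfl, -⟩ | ⟨-, rfl⟩
    · exact hcd.ne (f.injective (Subtype.ext h₁))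
    · exact hdc.ne (f.injective (Subtype.ext h₂))

end ChipFiring

section UpperLocallyDistributive

variable {L : Type*} [Lattice L] [Fintype L]

theorem MsetDiff_nonempty {x y : L} (hxy : ¬ y ≤ x) : (MsetDiff x y).Nonempty := by
  obtain ⟨m, -, hm⟩ :=
    (Set.toFinite {z : L | x ≤ z ∧ ¬ y ≤ z}).exists_le_maximal (a := x) ⟨le_rfl, hxy⟩
  have habove : ∀ z, m < z → y ≤ z := fun z hz => by
    by_contra hyz
    exact hm.not_prop_of_gt hz ⟨hm.prop.1.trans hz.le, hyz⟩
  have hlt : m < m ⊔ y := left_lt_sup.2 hm.prop.2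
  refine ⟨m, ⟨m ⊔ y, ⟨hlt, fun z hz hz' => ?_⟩, fun z hz => ?_⟩, hm.prop⟩
  · exact hz'.not_ge (sup_le hz.le (habove z hz))
  · exact (hz.eq_or_eq hlt.le (sup_le hz.le (habove z hz.lt))).resolve_left hlt.ne' |>.symm

variable [BoundedOrder L]

theorem CovBy.le_uplus {x y : L} (h : x ⋖ y) : y ≤ uplus x := by
  have := Finset.le_sup (f := fun y : L => if x ⋖ y then y else ⊥) (Finset.mem_univ y)
  simp only [h, if_true] at this
  exact this

theorem IsULD.inf_sup_le (hULD : IsULD L) {x a b c : L} (hx : x ≠ ⊤)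
    (ha : a ∈ Set.Icc x (uplus x)) (hb : b ∈ Set.Icc x (uplus x))
    (hc : c ∈ Set.Icc x (uplus x)) : a ⊓ (b ⊔ c) ≤ (a ⊓ b) ⊔ (a ⊓ c) := by
  obtain ⟨n, ⟨e⟩⟩ := hULD x hx
  let a' : Set.Icc x (uplus x) := ⟨a, ha⟩
  let b' : Set.Icc x (uplus x) := ⟨b, hb⟩
  let c' : Set.Icc x (uplus x) := ⟨c, hc⟩
  have h : a' ⊓ (b' ⊔ c') ≤ (a' ⊓ b') ⊔ (a' ⊓ c') := by
    rw [← e.le_iff_le]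
    simp only [map_inf, map_sup, inf_sup_left, le_refl]
  exact h

theorem IsULD.not_le_sup_of_covBy (hULD : IsULD L) {x y z w : L}
    (hy : x ⋖ y) (hz : x ⋖ z) (hw : x ⋖ w) (hyz : y ≠ z) (hyw : y ≠ w) :
    ¬ y ≤ z ⊔ w := by
  intro hle
  have hd := hULD.inf_sup_le (hy.lt.trans_le le_top).ne ⟨hy.le, hy.le_uplus⟩
    ⟨hz.le, hz.le_uplus⟩ ⟨hw.le, hw.le_uplus⟩
  have hinf : ∀ u, x ⋖ u → y ≠ u → y ⊓ u ≤ x := fun u hu hyu => by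
    rcases hy.eq_or_eq (le_inf hy.le hu.le) inf_le_left with h | h
    · exact h.le
    · exact absurd ((hu.eq_or_eq hy.le (inf_eq_left.1 h)).resolve_left hy.lt.ne') hyu
  exact hy.lt.not_ge ((le_inf le_rfl hle).trans (hd.trans (sup_le (hinf z hz hyz) (hinf w hw hyw))))

theorem IsULD.covBy_sup (hULD : IsULD L) {x y z : L} (hy : x ⋖ y) (hz : x ⋖ z)
    (hyz : y ≠ z) : z ⋖ z ⊔ y := by
  refine ⟨left_lt_sup.2 fun h => ?_, fun w hzw hw => ?_⟩
  · exact hyz ((hz.eq_or_eq hy.le h).resolve_left hy.lt.ne')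
  · have hd := hULD.inf_sup_le (a := w) (hy.lt.trans_le le_top).ne
      ⟨hz.le.trans hzw.le, hw.le.trans (sup_le hz.le_uplus hy.le_uplus)⟩
      ⟨hz.le, hz.le_uplus⟩ ⟨hy.le, hy.le_uplus⟩
    rw [inf_eq_left.2 hw.le] at hd
    rcases hy.eq_or_eq (le_inf (hz.le.trans hzw.le) hy.le : x ≤ w ⊓ y) inf_le_right with h | h
    · rw [h] at hd
      exact hzw.not_ge (hd.trans (sup_le inf_le_right hz.le))
    · exact hw.not_ge (sup_le hzw.le (inf_eq_right.1 h))

theorem IsULD.msetDiff_subsingleton (hULD : IsULD L) {x y : L} (hxy : x ⋖ y) :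
    (MsetDiff x y).Subsingleton := by
  induction x using WellFoundedGT.induction generalizing y with
  | ind x ih =>
    -- A member `m ≠ x` of `M_x \ M_y` lies above some cover of `x` other than `y`.
    have hcover : ∀ {m}, m ∈ MsetDiff x y → m ≠ x → ∃ z, x ⋖ z ∧ z ≤ m ∧ y ≠ z := by
      intro m hm hmx
      obtain ⟨z, hz, hzm⟩ := exists_covBy_le_of_lt (lt_of_le_of_ne hm.2.1 hmx.symm)
      exact ⟨z, hz, hzm, fun h => hm.2.2 (h ▸ hzm)⟩
    have hunique : MeetIrred x → ∀ z, x ⋖ z → y = z := fun hx z hz => hx.unique hxy hz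
    intro m₁ h₁ m₂ h₂
    by_cases hx₁ : m₁ = x
    · by_contra hne
      obtain ⟨z, hz, -, hyz⟩ := hcover h₂ fun h => hne (hx₁.trans h.symm)
      exact hyz (hunique (hx₁ ▸ h₁.1) z hz)
    by_cases hx₂ : m₂ = x
    · obtain ⟨z, hz, -, hyz⟩ := hcover h₁ hx₁
      exact absurd (hunique (hx₂ ▸ h₂.1) z hz) hyz
    obtain ⟨z, hz, hzm₁, hyz⟩ := hcover h₁ hx₁
    obtain ⟨w, hw, hwm₂, hyw⟩ := hcover h₂ hx₂
    obtain ⟨m, hm, hzwm, hym⟩ := MsetDiff_nonempty (hULD.not_le_sup_of_covBy hxy hz hw hyz hyw)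
    have hlift : ∀ {u m' : L}, m' ∈ MsetDiff x y → x ⋖ u → y ≠ u → u ≤ m' → u ≤ m →
        m' = m := fun hm' hu hyu hum' hum =>
      ih _ hu.lt (hULD.covBy_sup hxy hu hyu)
        ⟨hm'.1, hum', fun h => hm'.2.2 (le_sup_right.trans h)⟩
        ⟨hm, hum, fun h => hym (le_sup_right.trans h)⟩
    exact (hlift h₁ hz hyz hzm₁ (le_sup_left.trans hzwm)).trans
      (hlift h₂ hw hyw hwm₂ (le_sup_right.trans hzwm)).symm

theorem IsULD.exists_msetDiff_eq_singleton (hULD : IsULD L) {x y : L} (hxy : x ⋖ y) :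
    ∃ m, MsetDiff x y = {m} := by
  obtain ⟨m, hm⟩ := MsetDiff_nonempty hxy.lt.not_ge
  exact ⟨m, (hULD.msetDiff_subsingleton hxy).eq_singleton_of_mem hm⟩

end UpperLocallyDistributive

/-- The vertices fired between two configurations `a ≤ c` are the images under `κ` of the
meet-irreducibles in `M_a \ M_c`. -/
theorem mem_firing_iff_exists_meetIrred {V : Type*} {E : V → V → ℕ} {O : V → ℕ}
    (hUFP : ReachesUFP E O) (hSimple : SimpleCFG E O)
    {L : Type*} [Lattice L] [Fintype L] [BoundedOrder L] (hULD : IsULD L)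
    (f : L ≃ {c : V → ℕ // Reaches E O c})
    (hf : ∀ a b : L, a ≤ b ↔ Reaches E (f a).val (f b).val)
    (κ : {m : L // MeetIrred m} → V)
    (hκ : ∀ (m : {m : L // MeetIrred m}) (c c' : L) (v : V),
      c ⋖ c' → MsetDiff c c' = {m.val} → FireStep E (f c).val v (f c').val → κ m = v)
    (c : L) (l : List V) (a : L) (hl : ValidSeq E (f a).val l)
    (hc : fireList E (f a).val l = (f c).val) (v : V) :
    v ∈ l ↔ ∃ m : {m : L // MeetIrred m}, a ≤ m.val ∧ ¬ c ≤ m.val ∧ κ m = v := by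
  induction l generalizing a with
  | nil =>
    obtain rfl : a = c := f.injective (Subtype.ext hc)
    simp only [List.not_mem_nil, false_iff]
    rintro ⟨m, h, h', -⟩
    exact h' h
  | cons u l ih =>
    obtain ⟨hu, hl⟩ := hl
    obtain ⟨b, hb⟩ : ∃ b : L, (f b).val = fire E (f a).val u :=
      ⟨f.symm ⟨_, (f a).2.trans hu.reaches_fire⟩, by simp⟩
    have hab : a ⋖ b := covBy_of_fireStep hUFP hSimple f hf ⟨hu, hb.symm⟩
    rw [fireList, ← hb] at hc
    rw [← hb] at hl
    have hbc : b ≤ c := (hf _ _).2 ⟨l, hl, hc⟩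
    obtain ⟨m₀, hdiff⟩ := hULD.exists_msetDiff_eq_singleton hab
    have hm₀ : m₀ ∈ MsetDiff a b := hdiff ▸ Set.mem_singleton m₀
    have hκ₀ : κ ⟨m₀, hm₀.1⟩ = u := hκ ⟨m₀, hm₀.1⟩ a b u hab hdiff ⟨hu, hb.symm⟩
    rw [List.mem_cons, ih b hl hc]
    constructor
    · rintro (rfl | ⟨m, hbm, hcm, hm⟩)
      · exact ⟨⟨m₀, hm₀.1⟩, hm₀.2.1, fun h => hm₀.2.2 (hbc.trans h), hκ₀⟩
      · exact ⟨m, hab.le.trans hbm, hcm, hm⟩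
    · rintro ⟨m, ham, hcm, rfl⟩
      by_cases hbm : b ≤ m.val
      · exact Or.inr ⟨m, hbm, hcm, rfl⟩
      · have hmem : m.val ∈ MsetDiff a b := ⟨m.2, ham, hbm⟩
        rw [hdiff] at hmem
        obtain rfl : m = ⟨m₀, hm₀.1⟩ := Subtype.ext hmem
        exact Or.inl hκ₀

/-- for a simple CFG reaching a unique fixed point generating the finite
ULD lattice `L`, with `κ` the bijection sending each meet-irreducible `m` to the vertex
fired in any cover `c ⋖ c'` with `𝔪(c,c') = m`, for every configuration `c` the set
`ϑ(c)` of vertices fired in any firing sequence from `O` to `c` equals `κ(M \ M_c)`. -/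
theorem stmt2 {V : Type*} [Finite V] (E : V → V → ℕ) (O : V → ℕ)
    (hUFP : ReachesUFP E O) (hSimple : SimpleCFG E O)
    {L : Type*} [Lattice L] [Fintype L] [BoundedOrder L] (hULD : IsULD L)
    (f : L ≃ {c : V → ℕ // Reaches E O c})
    (hf : ∀ a b : L, a ≤ b ↔ Reaches E (f a).val (f b).val)
    (κ : {m : L // MeetIrred m} → V)
    (hκ : ∀ (m : {m : L // MeetIrred m}) (c c' : L) (v : V),
      c ⋖ c' → MsetDiff c c' = {m.val} → FireStep E (f c).val v (f c').val → κ m = v) :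
    ∀ (c : L) (l : List V), ValidSeq E O l → fireList E O l = (f c).val →
      ∀ v : V, v ∈ l ↔ ∃ m : {m : L // MeetIrred m}, ¬ c ≤ m.val ∧ κ m = v := by
  intro c l hl hc v
  obtain ⟨a, ha⟩ : ∃ a : L, (f a).val = O := ⟨f.symm ⟨O, [], trivial, rfl⟩, by simp⟩
  have hbot : ∀ b, a ≤ b := fun b => (hf _ _).2 (by rw [ha]; exact (f b).2)
  rw [mem_firing_iff_exists_meetIrred hUFP hSimple hULD f hf κ hκ c l a (by rwa [ha])
    (by rw [ha, hc])]
  simp only [hbot, true_and]
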